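/- Fix n ≥ 2, let v be an integer with 0 ≤ v ≤ n − 2, and let c ∈ ℤ be a nonzero integer with 2-adic valuation v₂(c) = v. Then M_c is isomorphic, as a real representation of C_{2^n}, to the direct sum of 2^v copies of the real representation of C_{2^n} on ℝ[y]/(y^(2^(n-1-v)) + 1) in which the generator γ acts by multiplication by the image of y. -/

import Mathlib

open Polynomial

/-- `An n = ℝ[x]/(x^(2^(n-1)) + 1)`. -/
noncomputable abbrev An (n : ℕ) : Type :=
  ℝ[X] ⧸ Ideal.span {(X : ℝ[X]) ^ 2 ^ (n - 1) + 1}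

/-- The image of `x` in `An n`, as a unit (its inverse is `-x^(2^(n-1)-1)`);
it has multiplicative order `2^n`.  For `c : ℤ`, the representation `M c` of the
cyclic group `C_{2^n} = ⟨γ⟩` is `An n` with `γ` acting by multiplication by `(xu n)^c`. -/
noncomputable def xu (n : ℕ) : (An n)ˣ :=
  Units.mkOfMulEqOne (Ideal.Quotient.mk _ X)
    (-(Ideal.Quotient.mk (Ideal.span {(X : ℝ[X]) ^ 2 ^ (n - 1) + 1}) X) ^ (2 ^ (n - 1) - 1))
    (by
      have h0 : (Ideal.Quotient.mk (Ideal.span {(X : ℝ[X]) ^ 2 ^ (n - 1) + 1})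
          ((X : ℝ[X]) ^ 2 ^ (n - 1) + 1)) = 0 :=
        Ideal.Quotient.eq_zero_iff_mem.mpr (Ideal.subset_span (Set.mem_singleton _))
      have hx : (Ideal.Quotient.mk (Ideal.span {(X : ℝ[X]) ^ 2 ^ (n - 1) + 1}) X) ^ 2 ^ (n - 1)
          = -1 := by
        rw [map_add, map_pow, map_one] at h0
        linear_combination h0
      have h1 : 1 ≤ 2 ^ (n - 1) := Nat.one_le_two_pow
      calc Ideal.Quotient.mk _ X *
            (-(Ideal.Quotient.mk (Ideal.span {(X : ℝ[X]) ^ 2 ^ (n - 1) + 1}) X) ^ (2 ^ (n - 1) - 1))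
          = -((Ideal.Quotient.mk (Ideal.span {(X : ℝ[X]) ^ 2 ^ (n - 1) + 1}) X) ^ (2 ^ (n - 1) - 1 + 1)) := by
            ring
        _ = 1 := by rw [Nat.sub_add_cancel h1, hx]; ring)

/-- Polynomials are spanned by the powers of `X`, hence so is every quotient. -/
theorem Ideal.Quotient.eq_top_of_forall_mk_X_pow_mem {R : Type*} [CommRing R] {I : Ideal R[X]}
    {p : Submodule R (R[X] ⧸ I)} (h : ∀ j : ℕ, Ideal.Quotient.mk I X ^ j ∈ p) : p = ⊤ := by
  refine eq_top_iff.mpr fun a _ => ?_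
  obtain ⟨f, rfl⟩ := Ideal.Quotient.mk_surjective a
  induction f using Polynomial.induction_on' with
  | add f g hf hg => rw [map_add]; exact p.add_mem (hf trivial) (hg trivial)
  | monomial j r =>
    have hr : Ideal.Quotient.mk I (monomial j r) = r • Ideal.Quotient.mk I X ^ j := by
      rw [← smul_X_eq_monomial, ← map_pow]
      rfl
    rw [hr]
    exact p.smul_mem r (h j)

theorem natDegree_X_pow_add_one {R : Type*} [CommRing R] [Nontrivial R] {k : ℕ} :
    ((X : R[X]) ^ k + 1).natDegree = k := by
  simpa using natDegree_X_pow_add_C (R := R) (n := k) (r := 1)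

theorem monic_X_pow_add_one {R : Type*} [CommRing R] {k : ℕ} (hk : k ≠ 0) :
    ((X : R[X]) ^ k + 1).Monic := by
  simpa using monic_X_pow_add_C (1 : R) hk

theorem finrank_quotient_X_pow_add_one {F : Type*} [Field F] (k : ℕ) :
    Module.finrank F (F[X] ⧸ Ideal.span {(X : F[X]) ^ k + 1}) = k := by
  rw [finrank_quotient_span_eq_natDegree, natDegree_X_pow_add_one]

theorem finite_quotient_X_pow_add_one {F : Type*} [Field F] {k : ℕ} (hk : k ≠ 0) :
    Module.Finite F (F[X] ⧸ Ideal.span {(X : F[X]) ^ k + 1}) :=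
  (monic_X_pow_add_one hk).finite_quotient

theorem xu_val (n : ℕ) :
    (xu n : An n) = Ideal.Quotient.mk (Ideal.span {(X : ℝ[X]) ^ 2 ^ (n - 1) + 1}) X := rfl

theorem xu_pow_half (n : ℕ) : xu n ^ 2 ^ (n - 1) = -1 := by
  ext
  rw [Units.val_pow_eq_pow_val, Units.val_neg, Units.val_one, xu_val, ← map_pow,
    eq_neg_iff_add_eq_zero, ← map_one (Ideal.Quotient.mk _), ← map_add]
  exact Ideal.Quotient.eq_zero_iff_mem.mpr (Ideal.mem_span_singleton_self _)

theorem xu_pow_two_pow {n : ℕ} (hn : n ≠ 0) : xu n ^ 2 ^ n = 1 := by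
  have h : 2 ^ n = 2 ^ (n - 1) * 2 := by
    rw [← pow_succ, Nat.sub_add_cancel (Nat.one_le_iff_ne_zero.mpr hn)]
  rw [h, pow_mul, xu_pow_half]
  exact neg_one_sq (R := (An n)ˣ)

theorem Units.neg_one_zpow_of_odd {R : Type*} [Ring R] {d : ℤ} (hd : Odd d) :
    (-1 : Rˣ) ^ d = -1 := by
  obtain ⟨k, rfl⟩ := hd
  rw [zpow_add, zpow_mul, zpow_one, zpow_ofNat, neg_one_sq, one_zpow, one_mul]

/-- An odd integer has a natural inverse modulo every power of two. -/
theorem Odd.exists_nat_mul_eq_one_add {d : ℤ} (hd : Odd d) (n : ℕ) :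
    ∃ (e : ℕ) (t : ℤ), d * e = 1 + 2 ^ n * t := by
  obtain ⟨a, b, h⟩ := (Int.isCoprime_two_right.mpr hd).pow_right (n := n)
  refine ⟨(a % 2 ^ n).toNat, -b - d * (a / 2 ^ n), ?_⟩
  rw [Int.toNat_of_nonneg (Int.emod_nonneg _ (by positivity))]
  linear_combination h + d * Int.emod_add_mul_ediv a (2 ^ n)

/-- For `n ≥ 2`, `0 ≤ v ≤ n - 2` and `c` a nonzero integer with `v₂(c) = v`, the
representation `M c` (i.e. `An n` with the generator `γ` of `C_{2^n}` acting by
multiplication by `x^c`) is isomorphic to the direct sum of `2^v` copies of the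
representation `ℝ[y]/(y^(2^(n-1-v)) + 1)` on which `γ` acts by multiplication by
the image of `y`. -/
theorem stmt_8 (n : ℕ) (hn : 2 ≤ n) (v : ℕ) (hv : v ≤ n - 2) (c : ℤ) (hc : c ≠ 0)
    (hval : padicValInt 2 c = v) :
    ∃ T : An n ≃ₗ[ℝ] (Fin (2 ^ v) → ℝ[X] ⧸ Ideal.span {(X : ℝ[X]) ^ 2 ^ (n - 1 - v) + 1}),
      ∀ a : An n,
        T (((xu n ^ c : (An n)ˣ) : An n) * a)
          = fun i => Ideal.Quotient.mk (Ideal.span {(X : ℝ[X]) ^ 2 ^ (n - 1 - v) + 1}) X * T a i := by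
  have hn0 : n ≠ 0 := by omega
  have hdim : 2 ^ v * 2 ^ (n - 1 - v) = 2 ^ (n - 1) := by
    rw [← pow_add]; congr 1; omega
  obtain ⟨d, hd⟩ : (2 : ℤ) ^ v ∣ c := by
    have := padicValInt_dvd (p := 2) c
    rwa [hval] at this
  have hodd : Odd d := by
    rw [← Int.not_even_iff_odd, even_iff_two_dvd]
    rintro ⟨k, rfl⟩
    have h : ((2 : ℕ) : ℤ) ^ (v + 1) ∣ c := ⟨k, by rw [hd]; push_cast; ring⟩
    rw [padicValInt_dvd_iff, hval] at h
    omega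
  have hu : (((xu n ^ c : (An n)ˣ) : An n)) ^ 2 ^ (n - 1 - v) = -1 := by
    rw [← Units.val_pow_eq_pow_val, ← zpow_natCast, ← zpow_mul]
    have h : c * ((2 ^ (n - 1 - v) : ℕ) : ℤ) = ((2 ^ (n - 1) : ℕ) : ℤ) * d := by
      rw [hd, ← hdim]; push_cast; ring
    rw [h, zpow_mul, zpow_natCast, xu_pow_half, Units.neg_one_zpow_of_odd hodd, Units.val_neg,
      Units.val_one]
  obtain ⟨e, t, het⟩ := hodd.exists_nat_mul_eq_one_add n
  have hroot : (xu n ^ c) ^ e = xu n ^ 2 ^ v := by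
    have h : c * (e : ℤ) = ((2 ^ v : ℕ) : ℤ) + ((2 ^ n : ℕ) : ℤ) * (2 ^ v * t) := by
      push_cast; rw [hd]; linear_combination 2 ^ v * het
    rw [← zpow_natCast, ← zpow_mul, h, zpow_add, zpow_mul, zpow_natCast, zpow_natCast,
      xu_pow_two_pow hn0, one_zpow, mul_one]
  set u : An n := ((xu n ^ c : (An n)ˣ) : An n) with hu_def
  let J : Ideal ℝ[X] := Ideal.span {(X : ℝ[X]) ^ 2 ^ (n - 1 - v) + 1}
  let φ : (ℝ[X] ⧸ J) →ₐ[ℝ] An n := Ideal.Quotient.liftₐ J (aeval u) (by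
    intro f hf
    obtain ⟨g, rfl⟩ := Ideal.mem_span_singleton.mp hf
    simp [hu])
  have hφ : φ (Ideal.Quotient.mk J X) = u := by
    change aeval u X = u
    exact aeval_X u
  let S : (Fin (2 ^ v) → ℝ[X] ⧸ J) →ₗ[ℝ] An n :=
    ∑ i : Fin (2 ^ v), (LinearMap.mulRight ℝ ((xu n : An n) ^ (i : ℕ))) ∘ₗ φ.toLinearMap ∘ₗ
      LinearMap.proj i
  have hS : ∀ f, S f = ∑ i : Fin (2 ^ v), φ (f i) * (xu n : An n) ^ (i : ℕ) := by
    intro f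
    simp [S]
  have hsurj : Function.Surjective S := by
    rw [← LinearMap.range_eq_top]
    refine Ideal.Quotient.eq_top_of_forall_mk_X_pow_mem fun j => ?_
    refine ⟨Pi.single ⟨j % 2 ^ v, Nat.mod_lt _ (by positivity)⟩
      (Ideal.Quotient.mk J X ^ (e * (j / 2 ^ v))), ?_⟩
    rw [hS, Finset.sum_eq_single ⟨j % 2 ^ v, Nat.mod_lt _ (by positivity)⟩]
    · rw [Pi.single_eq_same, map_pow, hφ, pow_mul, hu_def, ← Units.val_pow_eq_pow_val, hroot,
        Units.val_pow_eq_pow_val, ← pow_mul, ← pow_add, Nat.div_add_mod, xu_val]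
    · intro i _ hi
      rw [Pi.single_eq_of_ne hi, map_zero, zero_mul]
    · simp
  have : Module.Finite ℝ (ℝ[X] ⧸ J) := finite_quotient_X_pow_add_one (by positivity)
  have : Module.Finite ℝ (An n) := finite_quotient_X_pow_add_one (by positivity)
  have hrank : Module.finrank ℝ (Fin (2 ^ v) → ℝ[X] ⧸ J) = Module.finrank ℝ (An n) := by
    rw [Module.finrank_pi_fintype, Finset.sum_const, Finset.card_univ, Fintype.card_fin,
      finrank_quotient_X_pow_add_one, finrank_quotient_X_pow_add_one, smul_eq_mul, hdim]
  let E := LinearEquiv.ofBijective S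
    ⟨(LinearMap.injective_iff_surjective_of_finrank_eq_finrank hrank).mpr hsurj, hsurj⟩
  refine ⟨E.symm, fun a => ?_⟩
  rw [LinearEquiv.symm_apply_eq]
  have ha : S (E.symm a) = a := E.apply_symm_apply a
  change u * a = S fun i => Ideal.Quotient.mk J X * E.symm a i
  conv_lhs => rw [← ha]
  rw [hS, hS, Finset.mul_sum]
  refine Finset.sum_congr rfl fun i _ => ?_
  rw [map_mul, hφ, mul_assoc]
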